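/- arXiv:2311.03608 — 2 statements merged into one kernel-verified Lean document; each statement's English description precedes it below -/
import Mathlib

section
/- In any implicit knowledge-based HMS model, for every individual i ∈ I, the pair (Λ*_i, Π*_i) jointly satisfies Explicit Measurability and Implicit Measurability: for all ω, ω' ∈ Ω, (a) ω' ∈ Λ*_i(ω) implies Π*_i(ω') = Π*_i(ω), and (b) ω' ∈ Π*_i(ω) implies Λ*_i(ω') = (Λ*_i(ω))_{S_{Π*_i(ω)}}, where S_{Π*_i(ω)} is the space containing Π*_i(ω). -/
/-!
For `ω ∈ S Φ`, the derived correspondence is `Π*(ω) = (Λ*(ω))_{α(ω)}`, which by Projections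
Preserve Implicit Knowledge equals `Λ*(ω_{α(ω)})`; in particular `S_{Π*(ω)} = S_{α(ω)}`. Explicit
Measurability follows because both `Λ*` (Stationarity) and `α` (property (I)) are constant on
`Λ*(ω)`, and Implicit Measurability is Stationarity of `Λ*` at the state `ω_{α(ω)}`.
-/

/-- The frame underlying HMS (Heifetz–Meier–Schipper) unawareness models: a complete
lattice of nonempty pairwise disjoint state spaces `S Φ` indexed by the subsets
`Φ ⊆ At` of atomic formulas (ordered by inclusion of the index), together with
commuting surjective projections `r Φ Ψ : S Φ → S Ψ` for `Ψ ⊆ Φ`. -/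
structure HMSFrame (At : Type*) (Ω : Type*) where
  S : Set At → Set Ω
  S_nonempty : ∀ Φ : Set At, (S Φ).Nonempty
  S_disjoint : ∀ ⦃Φ Φ' : Set At⦄, Φ ≠ Φ' → Disjoint (S Φ) (S Φ')
  S_cover : ∀ ω : Ω, ∃ Φ : Set At, ω ∈ S Φ
  r : Set At → Set At → Ω → Ω
  r_mem : ∀ ⦃Φ Ψ : Set At⦄, Ψ ⊆ Φ → ∀ ⦃ω : Ω⦄, ω ∈ S Φ → r Φ Ψ ω ∈ S Ψ
  r_surjOn : ∀ ⦃Φ Ψ : Set At⦄, Ψ ⊆ Φ → Set.SurjOn (r Φ Ψ) (S Φ) (S Ψ)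
  r_id : ∀ (Φ : Set At), ∀ ω ∈ S Φ, r Φ Φ ω = ω
  r_comp : ∀ ⦃Φ Ψ Υ : Set At⦄, Υ ⊆ Ψ → Ψ ⊆ Φ → ∀ ω ∈ S Φ, r Ψ Υ (r Φ Ψ ω) = r Φ Υ ω

variable {At Ω : Type*}

/-- `D^↑`, for a subset `D` of the space `S Φ`: all extensions of states in `D` to
(weakly) more expressive spaces. -/
def HMSFrame.up (F : HMSFrame At Ω) (Φ : Set At) (D : Set Ω) : Set Ω :=
  {ω : Ω | ∃ Ψ : Set At, Φ ⊆ Ψ ∧ ω ∈ F.S Ψ ∧ F.r Ψ Φ ω ∈ D}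

/-- `E` is an event with base-space `S Φ` (and base some `D ⊆ S Φ`). -/
def HMSFrame.IsEvent (F : HMSFrame At Ω) (Φ : Set At) (E : Set Ω) : Prop :=
  ∃ D, D ⊆ F.S Φ ∧ E = F.up Φ D

/-- Negation `¬E := (S Φ \ D)^↑` of an event `E` with base-space `S Φ`
(note `S Φ \ E = S Φ \ D` for an event `E` with base `D ⊆ S Φ`). -/
def HMSFrame.neg (F : HMSFrame At Ω) (Φ : Set At) (E : Set Ω) : Set Ω :=
  F.up Φ (F.S Φ \ E)

/-- Properties of the (explicit) possibility correspondence of HMS models: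
nonemptiness, Confinement, Generalized Reflexivity, Stationarity,
Projections Preserve Ignorance, and Projections Preserve Knowledge. -/
structure IsPossibility (F : HMSFrame At Ω) (Pi : Ω → Set Ω) : Prop where
  nonempty : ∀ ω : Ω, (Pi ω).Nonempty
  confinement : ∀ ⦃Φ : Set At⦄ ⦃ω : Ω⦄, ω ∈ F.S Φ → ∃ Ψ, Ψ ⊆ Φ ∧ Pi ω ⊆ F.S Ψ
  genRefl : ∀ ⦃Υ : Set At⦄ ⦃ω : Ω⦄, Pi ω ⊆ F.S Υ → ω ∈ F.up Υ (Pi ω)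
  stationarity : ∀ ⦃ω ω' : Ω⦄, ω' ∈ Pi ω → Pi ω' = Pi ω
  projIgnorance : ∀ ⦃Φ Ψ : Set At⦄ ⦃ω : Ω⦄, ω ∈ F.S Φ → Ψ ⊆ Φ →
    ∀ ⦃Υ Υ' : Set At⦄, Pi ω ⊆ F.S Υ → Pi (F.r Φ Ψ ω) ⊆ F.S Υ' →
      F.up Υ (Pi ω) ⊆ F.up Υ' (Pi (F.r Φ Ψ ω))
  projKnowledge : ∀ ⦃Φ Ψ Υ : Set At⦄ ⦃ω : Ω⦄, Υ ⊆ Ψ → Ψ ⊆ Φ → ω ∈ F.S Φ →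
    Pi ω ⊆ F.S Ψ → F.r Ψ Υ '' Pi ω = Pi (F.r Φ Υ ω)

/-- Properties of an implicit possibility correspondence `La` relative to the
explicit possibility correspondence `Pi`: Reflexivity, Stationarity, Projections
Preserve Implicit Knowledge (whose statement `(Λ(ω))_Ψ = Λ(ω_Ψ)` presupposes that
the projection of `Λ(ω)` is defined, i.e. `Λ(ω) ⊆ S Φ` for `ω ∈ S Φ`),
Explicit Measurability, and Implicit Measurability. -/
structure IsImplicit (F : HMSFrame At Ω) (Pi La : Ω → Set Ω) : Prop where
  refl : ∀ ω : Ω, ω ∈ La ω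
  stationarity : ∀ ⦃ω ω' : Ω⦄, ω' ∈ La ω → La ω' = La ω
  projImplicit : ∀ ⦃Φ : Set At⦄ ⦃ω : Ω⦄, ω ∈ F.S Φ →
    La ω ⊆ F.S Φ ∧ ∀ ⦃Ψ : Set At⦄, Ψ ⊆ Φ → F.r Φ Ψ '' La ω = La (F.r Φ Ψ ω)
  explicitMeas : ∀ ⦃ω ω' : Ω⦄, ω' ∈ La ω → Pi ω' = Pi ω
  implicitMeas : ∀ ⦃Φ Ψ : Set At⦄ ⦃ω ω' : Ω⦄, ω ∈ F.S Φ → Pi ω ⊆ F.S Ψ →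
    ω' ∈ Pi ω → La ω' = F.r Φ Ψ '' La ω

/-- Properties of the primitive implicit possibility correspondence `La` of an
implicit knowledge-based HMS model: nonemptiness, Reflexivity, Stationarity, and
Projections Preserve Implicit Knowledge. -/
structure IsImplicitStar (F : HMSFrame At Ω) (La : Ω → Set Ω) : Prop where
  nonempty : ∀ ω : Ω, (La ω).Nonempty
  refl : ∀ ω : Ω, ω ∈ La ω
  stationarity : ∀ ⦃ω ω' : Ω⦄, ω' ∈ La ω → La ω' = La ω
  projImplicit : ∀ ⦃Φ : Set At⦄ ⦃ω : Ω⦄, ω ∈ F.S Φ →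
    La ω ⊆ F.S Φ ∧ ∀ ⦃Ψ : Set At⦄, Ψ ⊆ Φ → F.r Φ Ψ '' La ω = La (F.r Φ Ψ ω)

/-- Property (O) (Lack of Conception): the awareness level at `ω ∈ S Φ` (encoded
by its index `al ω ⊆ At`, so that the awareness level is the space `S (al ω)`)
is weakly less expressive than `S Φ`. -/
def PropO (F : HMSFrame At Ω) (al : Ω → Set At) : Prop :=
  ∀ ⦃Φ : Set At⦄ ⦃ω : Ω⦄, ω ∈ F.S Φ → al ω ⊆ Φ

/-- Property (I) (Awareness Measurability). -/
def PropI (F : HMSFrame At Ω) (La : Ω → Set Ω) (al : Ω → Set At) : Prop :=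
  ∀ ⦃ω ω' : Ω⦄, ω' ∈ La ω → al ω' = al ω

/-- Property (II): if `ω ∈ S Φ` and `S Ψ ⪯ α(ω)` then `α(ω_Ψ) = S Ψ`. -/
def PropII (F : HMSFrame At Ω) (al : Ω → Set At) : Prop :=
  ∀ ⦃Φ Ψ : Set At⦄ ⦃ω : Ω⦄, ω ∈ F.S Φ → Ψ ⊆ al ω → Ψ ⊆ Φ → al (F.r Φ Ψ ω) = Ψ

/-- Property (III): if `ω ∈ S Φ` and `α(ω) ⪯ S Ψ ⪯ S Φ` then `α(ω_Ψ) = α(ω)`. -/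
def PropIII (F : HMSFrame At Ω) (al : Ω → Set At) : Prop :=
  ∀ ⦃Φ Ψ : Set At⦄ ⦃ω : Ω⦄, ω ∈ F.S Φ → al ω ⊆ Ψ → Ψ ⊆ Φ → al (F.r Φ Ψ ω) = al ω

/-- Property (IV): if `ω ∈ S Φ` and `Ψ ⊆ Φ` then `α(ω) ⪰ α(ω_Ψ)`. -/
def PropIV (F : HMSFrame At Ω) (al : Ω → Set At) : Prop :=
  ∀ ⦃Φ Ψ : Set At⦄ ⦃ω : Ω⦄, ω ∈ F.S Φ → Ψ ⊆ Φ → al (F.r Φ Ψ ω) ⊆ al ω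

/-- `PiS` is the explicit possibility correspondence derived from the implicit
possibility correspondence `La` and the awareness function `al`:
`Π*(ω_Ψ) := (Λ*(ω))_{α(ω_Ψ)}` for all `ω ∈ S Φ` and `Ψ ⊆ Φ`. -/
def DerivedPi (F : HMSFrame At Ω) (La : Ω → Set Ω) (al : Ω → Set At)
    (PiS : Ω → Set Ω) : Prop :=
  ∀ ⦃Φ Ψ : Set At⦄ ⦃ω : Ω⦄, ω ∈ F.S Φ → Ψ ⊆ Φ →
    PiS (F.r Φ Ψ ω) = F.r Φ (al (F.r Φ Ψ ω)) '' La ω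

/-- The (explicit) knowledge operator `K(E) := {ω : Π(ω) ⊆ E}` (as a set this
agrees with the definition with default value `∅^{S(E)}` on the vacuous case). -/
def Kop (F : HMSFrame At Ω) (Pi : Ω → Set Ω) (E : Set Ω) : Set Ω :=
  {ω : Ω | Pi ω ⊆ E}

/-- The implicit knowledge operator `L(E) := {ω : Λ(ω) ⊆ E}`. -/
def Lop (F : HMSFrame At Ω) (La : Ω → Set Ω) (E : Set Ω) : Set Ω :=
  {ω : Ω | La ω ⊆ E}

/-- The awareness operator `A(E) := {ω : S_{Π(ω)} ⪰ S(E)}`, applied to an event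
with base-space `S Φ`. -/
def Aop (F : HMSFrame At Ω) (Pi : Ω → Set Ω) (Φ : Set At) : Set Ω :=
  {ω : Ω | ∃ Ψ : Set At, Φ ⊆ Ψ ∧ Pi ω ⊆ F.S Ψ}

/-- The unawareness operator `U(E) := ¬A(E)`, applied to an event with
base-space `S Φ` (recall `A(E)` is an `S(E)`-based event). -/
def Uop (F : HMSFrame At Ω) (Pi : Ω → Set Ω) (Φ : Set At) : Set Ω :=
  F.neg Φ (Aop F Pi Φ)

/-- The awareness operator `A*(E) := {ω : α(ω) ⪰ S(E)}` defined from the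
awareness function, applied to an event with base-space `S Φ`. -/
def AopStar (al : Ω → Set At) (Φ : Set At) : Set Ω :=
  {ω : Ω | Φ ⊆ al ω}

/-- An HMS model: the frame together with a possibility correspondence for each
individual and a valuation mapping each atomic formula to an event. -/
structure HMSModel (At Ω I : Type*) extends HMSFrame At Ω where
  Pi : I → Ω → Set Ω
  Pi_poss : ∀ i : I, IsPossibility toHMSFrame (Pi i)
  val : At → Set Ω
  val_event : ∀ p : At, ∃ Φ : Set At, toHMSFrame.IsEvent Φ (val p)

/-- A complemented HMS model: an HMS model together with an implicit possibility
correspondence for each individual. -/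
structure CompHMSModel (At Ω I : Type*) extends HMSModel At Ω I where
  La : I → Ω → Set Ω
  La_impl : ∀ i : I, IsImplicit toHMSModel.toHMSFrame (Pi i) (La i)

/-- An implicit knowledge-based HMS model: the frame together with, for each
individual, a primitive implicit possibility correspondence and an awareness
function satisfying (O)-(IV), and a valuation mapping atoms to events. -/
structure ImpHMSModel (At Ω I : Type*) extends HMSFrame At Ω where
  LaS : I → Ω → Set Ω
  LaS_impl : ∀ i : I, IsImplicitStar toHMSFrame (LaS i)
  al : I → Ω → Set At
  al_O : ∀ i : I, PropO toHMSFrame (al i)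
  al_I : ∀ i : I, PropI toHMSFrame (LaS i) (al i)
  al_II : ∀ i : I, PropII toHMSFrame (al i)
  al_III : ∀ i : I, PropIII toHMSFrame (al i)
  al_IV : ∀ i : I, PropIV toHMSFrame (al i)
  val : At → Set Ω
  val_event : ∀ p : At, ∃ Φ : Set At, toHMSFrame.IsEvent Φ (val p)

section DerivedCorrespondence

variable {F : HMSFrame At Ω} {La PiS : Ω → Set Ω} {al : Ω → Set At} {Φ Ψ : Set At} {ω ω' : Ω}

theorem HMSFrame.index_unique (hΦ : ω ∈ F.S Φ) (hΨ : ω ∈ F.S Ψ) : Φ = Ψ := by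
  by_contra hne
  exact Set.disjoint_left.mp (F.S_disjoint hne) hΦ hΨ

namespace IsImplicitStar

theorem subset_space (hLa : IsImplicitStar F La) (hω : ω ∈ F.S Φ) : La ω ⊆ F.S Φ :=
  (hLa.projImplicit hω).1

theorem image_proj (hLa : IsImplicitStar F La) (hω : ω ∈ F.S Φ) (hΨ : Ψ ⊆ Φ) :
    F.r Φ Ψ '' La ω = La (F.r Φ Ψ ω) :=
  (hLa.projImplicit hω).2 hΨ

end IsImplicitStar

namespace DerivedPi

theorem eq_image_awareness (hPi : DerivedPi F La al PiS) (hω : ω ∈ F.S Φ) :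
    PiS ω = F.r Φ (al ω) '' La ω := by
  simpa only [F.r_id Φ ω hω] using hPi hω subset_rfl

theorem eq_implicit_proj_awareness (hPi : DerivedPi F La al PiS) (hLa : IsImplicitStar F La)
    (hO : PropO F al) (hω : ω ∈ F.S Φ) : PiS ω = La (F.r Φ (al ω) ω) := by
  rw [hPi.eq_image_awareness hω, hLa.image_proj hω (hO hω)]

theorem subset_awareness_space (hPi : DerivedPi F La al PiS) (hLa : IsImplicitStar F La)
    (hO : PropO F al) (ω : Ω) : PiS ω ⊆ F.S (al ω) := by
  obtain ⟨Φ, hω⟩ := F.S_cover ω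
  rw [hPi.eq_implicit_proj_awareness hLa hO hω]
  exact hLa.subset_space (F.r_mem (hO hω) hω)

theorem explicitMeas (hPi : DerivedPi F La al PiS) (hLa : IsImplicitStar F La)
    (hI : PropI F La al) (h : ω' ∈ La ω) : PiS ω' = PiS ω := by
  obtain ⟨Φ, hω⟩ := F.S_cover ω
  have hω' : ω' ∈ F.S Φ := hLa.subset_space hω h
  calc
    PiS ω' = F.r Φ (al ω') '' La ω' := hPi.eq_image_awareness hω'
    _ = F.r Φ (al ω) '' La ω := by rw [hI h, hLa.stationarity h]
    _ = PiS ω := (hPi.eq_image_awareness hω).symm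

theorem implicitMeas (hPi : DerivedPi F La al PiS) (hLa : IsImplicitStar F La)
    (hO : PropO F al) (hω : ω ∈ F.S Φ) (hΨ : PiS ω ⊆ F.S Ψ) (h : ω' ∈ PiS ω) :
    La ω' = F.r Φ Ψ '' La ω := by
  obtain rfl : al ω = Ψ :=
    F.index_unique (hPi.subset_awareness_space hLa hO ω h) (hΨ h)
  have hmem : ω' ∈ La (F.r Φ (al ω) ω) := hPi.eq_implicit_proj_awareness hLa hO hω ▸ h
  calc
    La ω' = La (F.r Φ (al ω) ω) := hLa.stationarity hmem
    _ = F.r Φ (al ω) '' La ω := (hLa.image_proj hω (hO hω)).symm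

end DerivedPi

end DerivedCorrespondence

theorem derived_pi_measurability_general
    {At Ω : Type*} {F : HMSFrame At Ω} {La PiS : Ω → Set Ω} {al : Ω → Set At}
    (hLa : IsImplicitStar F La) (hO : PropO F al) (hI : PropI F La al)
    (hPi : DerivedPi F La al PiS) :
    (∀ ⦃ω ω' : Ω⦄, ω' ∈ La ω → PiS ω' = PiS ω) ∧
    (∀ ⦃Φ Ψ : Set At⦄ ⦃ω ω' : Ω⦄, ω ∈ F.S Φ → PiS ω ⊆ F.S Ψ → ω' ∈ PiS ω →
      La ω' = F.r Φ Ψ '' La ω) :=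
  ⟨fun _ _ => hPi.explicitMeas hLa hI, fun _ _ _ _ => hPi.implicitMeas hLa hO⟩

/-- In any implicit knowledge-based HMS model, for every individual
`i ∈ I`, the pair `(Λ*_i, Π*_i)` jointly satisfies Explicit Measurability and
Implicit Measurability: (a) `ω' ∈ Λ*_i(ω)` implies `Π*_i(ω') = Π*_i(ω)`, and
(b) `ω' ∈ Π*_i(ω)` implies `Λ*_i(ω') = (Λ*_i(ω))_{S_{Π*_i(ω)}}`. -/
theorem derived_pi_measurability
    {At Ω I : Type*} [Nonempty At] [Nonempty I]
    (M : ImpHMSModel At Ω I) (i : I) (PiS : Ω → Set Ω)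
    (hPiS : DerivedPi M.toHMSFrame (M.LaS i) (M.al i) PiS) :
    (∀ ⦃ω ω' : Ω⦄, ω' ∈ M.LaS i ω → PiS ω' = PiS ω) ∧
    (∀ ⦃Φ Ψ : Set At⦄ ⦃ω ω' : Ω⦄, ω ∈ M.S Φ → PiS ω ⊆ M.S Ψ → ω' ∈ PiS ω →
      M.LaS i ω' = M.r Φ Ψ '' M.LaS i ω) :=
  derived_pi_measurability_general (M.LaS_impl i) (M.al_O i) (M.al_I i) hPiS
end

section
/- In any implicit knowledge-based HMS model, for every individual i ∈ I and every event E: (1) A*_i(E) = A_i(E), where A*_i is the awareness operator defined from the awareness function α_i and A_i is the awareness operator defined from the derived explicit possibility correspondence Π*_i; and (2) K_i(E) = L*_i(E) ∩ A*_i(E), where K_i is the knowledge operator defined from Π*_i and L*_i is the implicit knowledge operator defined from Λ*_i. -/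
variable {At Ω : Type*}

/-!
`Π*(ω)` is the projection of the nonempty set `Λ*(ω)` to the awareness level `S (α(ω))`. The spaces
are disjoint, so `S (α(ω))` is the only space that can contain `Π*(ω)`, whence `A* = A`. Since
projections compose, a projected state `ω_Ψ` lies in an event with base-space `S Φ` exactly when `ω`
does and `Φ ⊆ Ψ`; applied to the states of `Λ*(ω)` with `Ψ = α(ω)` this gives `K = L* ∩ A*`.
-/

namespace HMSFrame

variable (F : HMSFrame At Ω) {Φ Ψ Θ : Set At} {D L : Set Ω} {ω : Ω}

theorem eq_of_mem_S (hΦ : ω ∈ F.S Φ) (hΨ : ω ∈ F.S Ψ) : Φ = Ψ := by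
  by_contra hne
  exact Set.disjoint_left.mp (F.S_disjoint hne) hΦ hΨ

theorem mem_up_iff (hω : ω ∈ F.S Θ) : ω ∈ F.up Φ D ↔ Φ ⊆ Θ ∧ F.r Θ Φ ω ∈ D := by
  constructor
  · rintro ⟨Ψ, hΦΨ, hωΨ, hD⟩
    obtain rfl := F.eq_of_mem_S hω hωΨ
    exact ⟨hΦΨ, hD⟩
  · rintro ⟨hΦΘ, hD⟩
    exact ⟨Θ, hΦΘ, hω, hD⟩

theorem r_mem_up_iff (hω : ω ∈ F.S Θ) (hΨ : Ψ ⊆ Θ) :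
    F.r Θ Ψ ω ∈ F.up Φ D ↔ ω ∈ F.up Φ D ∧ Φ ⊆ Ψ := by
  rw [F.mem_up_iff (F.r_mem hΨ hω), F.mem_up_iff hω]
  constructor
  · rintro ⟨hΦ, hD⟩
    exact ⟨⟨hΦ.trans hΨ, F.r_comp hΦ hΨ ω hω ▸ hD⟩, hΦ⟩
  · rintro ⟨⟨-, hD⟩, hΦ⟩
    exact ⟨hΦ, (F.r_comp hΦ hΨ ω hω).symm ▸ hD⟩

theorem image_r_subset_S_iff (hL : L ⊆ F.S Θ) (hne : L.Nonempty) (hΨ : Ψ ⊆ Θ) :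
    F.r Θ Ψ '' L ⊆ F.S Φ ↔ Φ = Ψ := by
  rw [Set.image_subset_iff]
  constructor
  · intro h
    obtain ⟨ω, hω⟩ := hne
    exact F.eq_of_mem_S (h hω) (F.r_mem hΨ (hL hω))
  · rintro rfl ω hω
    exact F.r_mem hΨ (hL hω)

theorem image_r_subset_up_iff (hL : L ⊆ F.S Θ) (hne : L.Nonempty) (hΨ : Ψ ⊆ Θ) :
    F.r Θ Ψ '' L ⊆ F.up Φ D ↔ L ⊆ F.up Φ D ∧ Φ ⊆ Ψ := by
  rw [Set.image_subset_iff]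
  constructor
  · intro h
    obtain ⟨ω, hω⟩ := hne
    exact ⟨fun ω' hω' => ((F.r_mem_up_iff (hL hω') hΨ).mp (h hω')).1,
      ((F.r_mem_up_iff (hL hω) hΨ).mp (h hω)).2⟩
  · rintro ⟨h, hΦ⟩ ω hω
    exact (F.r_mem_up_iff (hL hω) hΨ).mpr ⟨h hω, hΦ⟩

end HMSFrame

theorem DerivedPi.eq_image {F : HMSFrame At Ω} {La : Ω → Set Ω} {al : Ω → Set At}
    {PiS : Ω → Set Ω} (h : DerivedPi F La al PiS) {Θ : Set At} {ω : Ω} (hω : ω ∈ F.S Θ) :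
    PiS ω = F.r Θ (al ω) '' La ω := by
  simpa only [F.r_id Θ ω hω] using h hω subset_rfl

theorem derived_operators_agree_general (F : HMSFrame At Ω) {La PiS : Ω → Set Ω}
    {al : Ω → Set At} (hne : ∀ ω, (La ω).Nonempty) (hLa : ∀ ⦃Θ ω⦄, ω ∈ F.S Θ → La ω ⊆ F.S Θ)
    (hal : PropO F al) (hPiS : ∀ ⦃Θ ω⦄, ω ∈ F.S Θ → PiS ω = F.r Θ (al ω) '' La ω)
    {Φ : Set At} {E : Set Ω} (hE : F.IsEvent Φ E) :
    AopStar al Φ = Aop F PiS Φ ∧ Kop F PiS E = Lop F La E ∩ AopStar al Φ := by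
  obtain ⟨D, -, rfl⟩ := hE
  constructor
  · ext ω
    obtain ⟨Θ, hω⟩ := F.S_cover ω
    simp only [AopStar, Aop, Set.mem_ofPred_eq, hPiS hω,
      F.image_r_subset_S_iff (hLa hω) (hne ω) (hal hω), exists_eq_right]
  · ext ω
    obtain ⟨Θ, hω⟩ := F.S_cover ω
    simp only [Kop, Lop, AopStar, Set.mem_inter_iff, Set.mem_ofPred_eq, hPiS hω,
      F.image_r_subset_up_iff (hLa hω) (hne ω) (hal hω)]

/-- In any implicit knowledge-based HMS model, for every individual
`i ∈ I` and every event `E` (with base-space `S_Φ`):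
(1) `A*_i(E) = A_i(E)`, where `A*_i` is defined from the awareness function
`α_i` and `A_i` is defined from the derived explicit possibility correspondence
`Π*_i`; and (2) `K_i(E) = L*_i(E) ∩ A*_i(E)`, where `K_i` is defined from `Π*_i`
and `L*_i` is the implicit knowledge operator defined from `Λ*_i`. -/
theorem derived_operators_agree
    {At Ω I : Type*} [Nonempty At] [Nonempty I]
    (M : ImpHMSModel At Ω I) (i : I) (PiS : Ω → Set Ω)
    (hPiS : DerivedPi M.toHMSFrame (M.LaS i) (M.al i) PiS)
    (Φ : Set At) (E : Set Ω) (hE : M.toHMSFrame.IsEvent Φ E) :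
    AopStar (M.al i) Φ = Aop M.toHMSFrame PiS Φ ∧
    Kop M.toHMSFrame PiS E = Lop M.toHMSFrame (M.LaS i) E ∩ AopStar (M.al i) Φ :=
  derived_operators_agree_general M.toHMSFrame (M.LaS_impl i).nonempty
    (fun _ _ hω => ((M.LaS_impl i).projImplicit hω).1) (M.al_O i) (fun _ _ hω => hPiS.eq_image hω)
    hE
end
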